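/- arXiv:2310.00414 — 4 statements merged into one kernel-verified Lean document; each statement's English description precedes it below -/
import Mathlib

section
/- Let Γ be an n-rose labeled graph with all labels positive, and let γ = (e₁,…,eₛ,e) be a strict monotone cycle in Γ for some s ≥ 0. Suppose Γ′ is obtained from Γ by a single slide move of eᵢ or ēᵢ (for some 1 ≤ i ≤ s) over the edge e. Then Γ′ contains a strict monotone cycle. -/
/-! Labeled graphs in the sense of generalized Baumslag–Solitar theory. -/

structure LGraph (V E : Type) where
  o : E → V
  bar : E → E
  bar_bar : ∀ e, bar (bar e) = e
  bar_ne : ∀ e, bar e ≠ e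
  lab : E → ℤ

namespace LGraph

variable {V E V' E' : Type}

/-- Terminal vertex of an oriented edge. -/
def t (G : LGraph V E) (e : E) : V := G.o (G.bar e)

/-- All labels are positive. -/
def Positive (G : LGraph V E) : Prop := ∀ e : E, 0 < G.lab e

/-- No collapsible edge: every label-1 edge is a loop. -/
def Reduced (G : LGraph V E) : Prop := ∀ e : E, G.lab e = 1 → G.o e = G.t e

/-- An `n`-rose: one vertex and `n` pairs of oriented edges. -/
def IsRose (G : LGraph V E) (n : ℕ) : Prop :=
  Nat.card V = 1 ∧ Nat.card E = 2 * n

/-- Modulus of a single oriented edge: `λ(ē)/λ(e)`. -/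
def qe (G : LGraph V E) (e : E) : ℚ := (G.lab (G.bar e) : ℚ) / (G.lab e : ℚ)

/-- Modulus of an edge path. -/
def q (G : LGraph V E) (l : List E) : ℚ := (l.map G.qe).prod

/-- Consecutive edges match up. -/
def IsEdgePath (G : LGraph V E) (l : List E) : Prop :=
  List.Chain' (fun a b => G.t a = G.o b) l

/-- An `e`-edge path. -/
def IsEEdgePath (G : LGraph V E) (e : E) (l : List E) : Prop :=
  G.IsEdgePath l ∧
  (∀ a ∈ l, a ≠ e ∧ a ≠ G.bar e) ∧
  (∀ a ∈ l.head?, G.o a = G.o e) ∧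
  ∀ i : Fin l.length, ∃ k : ℤ,
    (G.lab e : ℚ) * G.q (l.take i.1) = (k : ℚ) * (G.lab (l.get i) : ℚ)

/-- A monotone cycle `(e₁,…,eₛ,e)`. -/
def IsMonotoneCycle (G : LGraph V E) (l : List E) (e : E) : Prop :=
  G.IsEEdgePath (G.bar e) l ∧
  G.t (l.getLastD e) = G.o e ∧
  ∃ k : ℤ, G.q (l ++ [e]) = (k : ℚ)

/-- A strict monotone cycle. -/
def IsStrictMonotoneCycle (G : LGraph V E) (l : List E) (e : E) : Prop :=
  G.IsMonotoneCycle l e ∧ G.q (l ++ [e]) ≠ 1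

def HasStrictMonotoneCycle (G : LGraph V E) : Prop :=
  ∃ (l : List E) (e : E), G.IsStrictMonotoneCycle l e

/-- A strict `e`-integer cycle. -/
def IsStrictIntegerCycle (G : LGraph V E) (e : E) (l : List E) : Prop :=
  G.IsEEdgePath e l ∧ l ≠ [] ∧
  G.t (l.getLastD e) = G.o (l.headD e) ∧
  (∃ k : ℤ, G.q l = (k : ℚ)) ∧ G.q l ≠ 1

/-- A mobile edge. -/
def Mobile (G : LGraph V E) (e : E) : Prop :=
  (∃ l, G.IsStrictMonotoneCycle l e ∨ G.IsStrictMonotoneCycle l (G.bar e)) ∨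
  (∃ l, G.IsStrictIntegerCycle e l ∨ G.IsStrictIntegerCycle (G.bar e) l)

/-- The single slide of `e` over `f` is permitted. -/
def CanSlide (G : LGraph V E) (e f : E) : Prop :=
  f ≠ e ∧ f ≠ G.bar e ∧ G.o f = G.o e ∧ G.lab f ∣ G.lab e

open Classical in
/-- The result of the single slide of `e` over `f`. -/
noncomputable def slide (G : LGraph V E) (e f : E) : LGraph V E where
  o := fun x => if x = e then G.t f else G.o x
  bar := G.bar
  bar_bar := G.bar_bar
  bar_ne := G.bar_ne
  lab := fun x => if x = e then G.lab e * G.lab (G.bar f) / G.lab f else G.lab x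

/-- Successively slide `e` over the edges of a path. -/
noncomputable def slidePath : LGraph V E → E → List E → LGraph V E
  | G, _, [] => G
  | G, e, f :: l => slidePath (G.slide e f) e l

/-- Each single slide in the successive slide of `e` over a path is permitted. -/
def CanSlidePath : LGraph V E → E → List E → Prop
  | _, _, [] => True
  | G, e, f :: l => G.CanSlide e f ∧ CanSlidePath (G.slide e f) e l

/-- Each single slide is permitted and each intermediate graph is reduced. -/
def GoodSlidePath : LGraph V E → E → List E → Prop
  | _, _, [] => True
  | G, e, f :: l => G.CanSlide e f ∧ (G.slide e f).Reduced ∧ GoodSlidePath (G.slide e f) e l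

/-- Perform a finite sequence of single slides, given as pairs (slid edge, edge slid over). -/
noncomputable def slideSeq : LGraph V E → List (E × E) → LGraph V E
  | G, [] => G
  | G, p :: rest => slideSeq (G.slide p.1 p.2) rest

/-- A sequence of permitted single slides, each sliding a mobile edge. -/
def MobileSlideSeq : LGraph V E → List (E × E) → Prop
  | _, [] => True
  | G, p :: rest => G.Mobile p.1 ∧ G.CanSlide p.1 p.2 ∧ MobileSlideSeq (G.slide p.1 p.2) rest

/-- Isomorphism of labeled graphs. -/
def Isom (G : LGraph V E) (G' : LGraph V' E') : Prop :=
  ∃ (φ : V → V') (Φ : E → E'),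
    Function.Bijective φ ∧ Function.Bijective Φ ∧
    (∀ x, G'.o (Φ x) = φ (G.o x)) ∧
    (∀ x, G'.bar (Φ x) = Φ (G.bar x)) ∧
    (∀ x, G'.lab (Φ x) = G.lab x)

open Classical in
/-- The result of the induction move at the loop `e` with multiplier `m`. -/
noncomputable def inductionMove (G : LGraph V E) (e : E) (m : ℤ) : LGraph V E where
  o := G.o
  bar := G.bar
  bar_bar := G.bar_bar
  bar_ne := G.bar_ne
  lab := fun x => if x ≠ e ∧ x ≠ G.bar e ∧ G.o x = G.o e then m * G.lab x else G.lab x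

/-- `G'` is obtained from `G` by a single slide move (up to isomorphism). -/
def IsSlideMove (G : LGraph V E) (G' : LGraph V' E') : Prop :=
  ∃ e f, G.CanSlide e f ∧ Isom G' (G.slide e f)

/-- `G'` is obtained from `G` by a (forward) induction move. -/
def IsInductionMove (G : LGraph V E) (G' : LGraph V' E') : Prop :=
  ∃ (e : E) (m : ℤ), G.o e = G.t e ∧ G.lab e = 1 ∧ 1 ≤ m ∧ m ∣ G.lab (G.bar e) ∧
    Isom G' (G.inductionMove e m)

/-- `G'` is obtained from `G` by an A-move. -/
def IsAMove (G : LGraph V E) (G' : LGraph V' E') : Prop :=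
  ∃ (e d : E) (e' : E') (φ : V → V') (Φ : E → E'),
    G.o e = G.t e ∧ G.lab e = 1 ∧ G.lab (G.bar e) ≠ 1 ∧
    G.o d = G.o e ∧ G.t d ≠ G.o e ∧
    G.lab d ≠ 1 ∧ G.lab (G.bar d) ≠ 1 ∧ G.lab d ∣ G.lab (G.bar e) ∧
    (∀ x : E, G.o x = G.o e → x = e ∨ x = G.bar e ∨ x = d) ∧
    G'.o e' = φ (G.t d) ∧ G'.t e' = φ (G.t d) ∧
    G'.lab e' = G.lab (G.bar d) ∧
    G'.lab (G'.bar e') = G.lab (G.bar d) * G.lab (G.bar e) ∧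
    (∀ w₁ w₂ : V, w₁ ≠ G.o e → w₂ ≠ G.o e → φ w₁ = φ w₂ → w₁ = w₂) ∧
    (∀ v' : V', ∃ w : V, w ≠ G.o e ∧ φ w = v') ∧
    (∀ x : E, x ≠ e → x ≠ G.bar e → x ≠ d → x ≠ G.bar d →
      Φ x ≠ e' ∧ Φ x ≠ G'.bar e' ∧
      G'.o (Φ x) = φ (G.o x) ∧ G'.bar (Φ x) = Φ (G.bar x) ∧ G'.lab (Φ x) = G.lab x) ∧
    (∀ x y : E, x ≠ e → x ≠ G.bar e → x ≠ d → x ≠ G.bar d →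
      y ≠ e → y ≠ G.bar e → y ≠ d → y ≠ G.bar d → Φ x = Φ y → x = y) ∧
    (∀ y : E', y ≠ e' → y ≠ G'.bar e' →
      ∃ x : E, x ≠ e ∧ x ≠ G.bar e ∧ x ≠ d ∧ x ≠ G.bar d ∧ Φ x = y)

/-- A strict ascending loop: a loop with `λ(e) = 1 ≠ λ(ē)`. -/
def HasStrictAscendingLoop (G : LGraph V E) : Prop :=
  ∃ e : E, G.o e = G.t e ∧ G.lab e = 1 ∧ G.lab (G.bar e) ≠ 1

end LGraph

/-- A labeled graph with its vertex and edge types bundled. -/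
structure BGraph where
  V : Type
  E : Type
  G : LGraph V E

/-- An elementary deformation move: a slide, an induction move or its inverse,
or an A-move or its inverse. -/
def BGraph.ElemMove (X Y : BGraph) : Prop :=
  LGraph.IsSlideMove X.G Y.G ∨ LGraph.IsInductionMove X.G Y.G ∨
  LGraph.IsInductionMove Y.G X.G ∨ LGraph.IsAMove X.G Y.G ∨ LGraph.IsAMove Y.G X.G

/-- A finite sequence of elementary moves with all intermediate graphs reduced. -/
def BGraph.MoveSeq : BGraph → BGraph → Prop :=
  Relation.ReflTransGen (fun X Y => X.ElemMove Y ∧ Y.G.Reduced)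

/-- A reduced labeled graph is non-ascending if no reduced labeled graph obtained from it
by slide, induction and A-moves (all intermediate graphs reduced) contains a
strict ascending loop. -/
def LGraph.NonAscending {V E : Type} (G : LGraph V E) : Prop :=
  ∀ Y : BGraph, BGraph.MoveSeq ⟨V, E, G⟩ Y → ¬ Y.G.HasStrictAscendingLoop

namespace LGraph

variable {V E : Type}

/-- `G.W N l M`: an element `N` at the start of `l` can be carried along `l`, giving `M`. -/
def W (G : LGraph V E) : ℤ → List E → ℤ → Prop
  | N, [], M => N = M
  | N, x :: l, M => ∃ k : ℤ, N = k * G.lab x ∧ W G (k * G.lab (G.bar x)) l M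

/-- The inverse path. -/
def rev (G : LGraph V E) (l : List E) : List E := (l.map G.bar).reverse

theorem W_append (G : LGraph V E) {N M K : ℤ} {l l' : List E} (h : G.W N l M)
    (h' : G.W M l' K) : G.W N (l ++ l') K := by
  induction l generalizing N with
  | nil => cases h; exact h'
  | cons x l ih =>
    obtain ⟨k, hk, h⟩ := h
    exact ⟨k, hk, ih h⟩

theorem W_split (G : LGraph V E) {N K : ℤ} {l l' : List E} (h : G.W N (l ++ l') K) :
    ∃ M, G.W N l M ∧ G.W M l' K := by
  induction l generalizing N with
  | nil => exact ⟨N, rfl, h⟩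
  | cons x l ih =>
    obtain ⟨k, hk, h⟩ := h
    obtain ⟨M, h1, h2⟩ := ih h
    exact ⟨M, ⟨k, hk, h1⟩, h2⟩

theorem W_scale (G : LGraph V E) (c : ℤ) {N M : ℤ} {l : List E} (h : G.W N l M) :
    G.W (c * N) l (c * M) := by
  induction l generalizing N with
  | nil => cases h; rfl
  | cons x l ih =>
    obtain ⟨k, hk, h⟩ := h
    refine ⟨c * k, by rw [hk, mul_assoc], ?_⟩
    rw [mul_assoc]
    exact ih h

theorem W_single (G : LGraph V E) (x : E) : G.W (G.lab x) [x] (G.lab (G.bar x)) :=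
  ⟨1, by simp, by simp [W]⟩

theorem W_rev (G : LGraph V E) {N M : ℤ} {l : List E} (h : G.W N l M) :
    G.W M (G.rev l) N := by
  induction l generalizing N with
  | nil => cases h; rfl
  | cons x l ih =>
    obtain ⟨k, hk, h⟩ := h
    have h1 := ih h
    have h2 := W_scale G k (W_single G (G.bar x))
    rw [G.bar_bar, ← hk] at h2
    simpa [rev] using W_append G h1 h2

theorem W_congr (G G' : LGraph V E) {N M : ℤ} {l : List E} (h : G.W N l M)
    (hl : ∀ x ∈ l, G'.lab x = G.lab x ∧ G'.lab (G'.bar x) = G.lab (G.bar x)) :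
    G'.W N l M := by
  induction l generalizing N with
  | nil => exact h
  | cons x l ih =>
    obtain ⟨k, hk, h⟩ := h
    have hx := hl x (by simp)
    refine ⟨k, by rw [hk, hx.1], ?_⟩
    rw [hx.2]
    exact ih h (fun y hy => hl y (by simp [hy]))

theorem W_subst (G G' : LGraph V E) (φ : E → List E)
    (hφ : ∀ x, G'.W (G.lab x) (φ x) (G.lab (G.bar x))) {N M : ℤ} {l : List E}
    (h : G.W N l M) : G'.W N (l.flatMap φ) M := by
  induction l generalizing N with
  | nil => exact h
  | cons x l ih =>
    obtain ⟨k, hk, h⟩ := h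
    rw [List.flatMap_cons, hk]
    exact W_append G' (W_scale G' k (hφ x)) (ih h)

theorem W_iff (G : LGraph V E) (hpos : G.Positive) (N M : ℤ) (l : List E) :
    G.W N l M ↔ (∀ i : Fin l.length, ∃ k : ℤ,
      (N : ℚ) * G.q (l.take i.1) = (k : ℚ) * (G.lab (l.get i) : ℚ)) ∧
      (N : ℚ) * G.q l = M := by
  induction l generalizing N with
  | nil => simp [W, q]
  | cons x l ih =>
    have hx : (G.lab x : ℚ) ≠ 0 := by exact_mod_cast (hpos x).ne'
    have key : ∀ (k : ℤ) (l : List E), N = k * G.lab x →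
        (N : ℚ) * G.q (x :: l) = ((k * G.lab (G.bar x) : ℤ) : ℚ) * G.q l := by
      intro k l hk
      simp only [q, qe, List.map_cons, List.prod_cons, hk]
      push_cast
      field_simp
    constructor
    · rintro ⟨k, hk, h⟩
      obtain ⟨h1, h2⟩ := (ih _).1 h
      refine ⟨?_, by rw [key k l hk, h2]⟩
      rintro ⟨i, hi⟩
      cases i with
      | zero => exact ⟨k, by simp [q, hk]⟩
      | succ i =>
        obtain ⟨k', hk'⟩ := h1 ⟨i, by simpa using hi⟩
        refine ⟨k', ?_⟩
        simp only [List.take_succ_cons]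
        rw [key k _ hk]
        simpa using hk'
    · rintro ⟨h1, h2⟩
      obtain ⟨k, hk⟩ := h1 ⟨0, by simp⟩
      have hk : N = k * G.lab x := by
        simp [q] at hk
        exact_mod_cast hk
      refine ⟨k, hk, (ih _).2 ⟨?_, by rw [← key k l hk, h2]⟩⟩
      rintro ⟨i, hi⟩
      obtain ⟨k', hk'⟩ := h1 ⟨i + 1, by simpa using hi⟩
      refine ⟨k', ?_⟩
      simp only [List.take_succ_cons] at hk'
      rw [key k _ hk] at hk'
      simpa using hk'

theorem smc_iff (G : LGraph V E) [Subsingleton V] (hpos : G.Positive) (l : List E) (e : E) :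
    G.IsStrictMonotoneCycle l e ↔ (∀ a ∈ l, a ≠ e ∧ a ≠ G.bar e) ∧
      ∃ m : ℤ, m ≠ 1 ∧ G.W (G.lab (G.bar e)) l (m * G.lab e) := by
  have hx : (G.lab e : ℚ) ≠ 0 := by exact_mod_cast (hpos e).ne'
  have hq : G.q (l ++ [e]) = (G.lab (G.bar e) : ℚ) * G.q l / G.lab e := by
    simp [q, qe]; ring
  constructor
  · rintro ⟨⟨⟨_, h2, _, h4⟩, _, k, hk⟩, hne⟩
    refine ⟨fun a ha => ⟨?_, (h2 a ha).1⟩, k, ?_, ?_⟩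
    · have := (h2 a ha).2
      rwa [G.bar_bar] at this
    · rintro rfl
      exact hne (by simpa using hk)
    · rw [W_iff G hpos]
      refine ⟨h4, ?_⟩
      rw [hq, div_eq_iff hx] at hk
      push_cast
      exact hk
  · rintro ⟨h1, m, hm, h⟩
    rw [W_iff G hpos] at h
    have hk : G.q (l ++ [e]) = m := by
      rw [hq, div_eq_iff hx, h.2]; push_cast; rfl
    refine ⟨⟨⟨?_, ?_, fun _ _ => Subsingleton.elim _ _, h.1⟩, Subsingleton.elim _ _, m, hk⟩, ?_⟩
    · have : (fun a b => G.t a = G.o b) = fun _ _ => True := by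
        funext a b; exact eq_true (Subsingleton.elim _ _)
      unfold IsEdgePath
      rw [this]
      exact List.isChain_iff_getElem.2 (by simp)
    · intro a ha
      rw [G.bar_bar]
      exact ⟨(h1 a ha).2, (h1 a ha).1⟩
    · rw [hk]; exact_mod_cast hm

theorem first_split (P : E → Prop) (l : List E) (h : ∃ x ∈ l, P x) :
    ∃ p y r, l = p ++ y :: r ∧ P y ∧ ∀ x ∈ p, ¬ P x := by
  induction l with
  | nil => simp at h
  | cons x l ih =>
    by_cases hx : P x
    · exact ⟨[], x, l, rfl, hx, by simp⟩
    · obtain ⟨p, y, r, h1, h2, h3⟩ := ih (by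
        obtain ⟨z, hz, hP⟩ := h
        rcases List.mem_cons.1 hz with rfl | hz
        · exact absurd hP hx
        · exact ⟨z, hz, hP⟩)
      refine ⟨x :: p, y, r, by simp [h1], h2, ?_⟩
      intro z hz
      rcases List.mem_cons.1 hz with rfl | hz
      · exact hx
      · exact h3 z hz

theorem mem_rev (G : LGraph V E) (l : List E) (x : E) : x ∈ G.rev l ↔ G.bar x ∈ l := by
  simp only [rev, List.mem_reverse, List.mem_map]
  constructor
  · rintro ⟨a, ha, rfl⟩
    rwa [G.bar_bar]
  · intro h
    exact ⟨_, h, G.bar_bar x⟩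

open Classical in
/-- Substitute the path `A` for the edge `g`. -/
noncomputable def sub (G : LGraph V E) (g : E) (A : List E) (x : E) : List E :=
  if x = g then A else if x = G.bar g then G.rev A else [x]

theorem W_sub (G G' : LGraph V E) (hb : G'.bar = G.bar) (g : E) (A : List E)
    (hl : ∀ x, x ≠ g → G'.lab x = G.lab x)
    (hA : G'.W (G.lab g) A (G.lab (G.bar g))) {N M : ℤ} {l : List E}
    (h : G.W N l M) : G'.W N (l.flatMap (G.sub g A)) M := by
  refine W_subst G G' _ (fun x => ?_) h
  unfold sub
  split_ifs with h1 h2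
  · rw [h1]; exact hA
  · rw [h2, G.bar_bar]
    have := W_rev G' hA
    simpa [rev, hb] using this
  · have := W_single G' x
    rw [hb, hl x h1, hl (G.bar x) (fun h => h2 (by rw [← h, G.bar_bar]))] at this
    exact this

theorem mem_sub (G : LGraph V E) (g : E) (A l : List E) (y : E)
    (h : y ∈ l.flatMap (G.sub g A)) :
    y ∈ A ∨ G.bar y ∈ A ∨ (y ∈ l ∧ y ≠ g ∧ y ≠ G.bar g) := by
  obtain ⟨x, hx, hy⟩ := List.mem_flatMap.1 h
  unfold sub at hy
  split_ifs at hy with h1 h2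
  · exact Or.inl hy
  · exact Or.inr (Or.inl ((mem_rev G A y).1 hy))
  · rw [List.mem_singleton] at hy
    subst hy
    exact Or.inr (Or.inr ⟨hx, h1, h2⟩)

end LGraph

/-- In an `n`-rose with positive labels carrying a strict monotone cycle
`(e₁,…,eₛ,e)`, sliding some `eᵢ` or `ēᵢ` over the edge `e` yields a graph which again
contains a strict monotone cycle. -/
theorem stmt1 {V E : Type} [Finite V] [Finite E] (G : LGraph V E) (n : ℕ)
    (hrose : G.IsRose n) (hpos : G.Positive)
    (l : List E) (e : E) (hsmc : G.IsStrictMonotoneCycle l e)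
    (g : E) (hg : g ∈ l ∨ G.bar g ∈ l)
    (hcan : G.CanSlide g e) :
    (G.slide g e).HasStrictMonotoneCycle := by
  classical
  have hsub : Subsingleton V := (Nat.card_eq_one_iff_unique.1 hrose.1).1
  obtain ⟨hav, m, hm, hW⟩ := (G.smc_iff hpos l e).1 hsmc
  obtain ⟨hne, hne', -, c, hc⟩ := hcan
  have hbe : G.bar e ≠ g := fun h => hne' (by rw [← h, G.bar_bar])
  have hbinj : ∀ x y, G.bar x = G.bar y → x = y := fun x y h => by
    rw [← G.bar_bar x, h, G.bar_bar]
  set G' := G.slide g e with hG'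
  have hb : G'.bar = G.bar := rfl
  have hl : ∀ x, x ≠ g → G'.lab x = G.lab x := fun x hx => if_neg hx
  have hlg : G'.lab g = c * G.lab (G.bar e) := by
    have : G'.lab g = G.lab g * G.lab (G.bar e) / G.lab e := if_pos rfl
    rw [this, hc, mul_assoc]
    exact Int.mul_ediv_cancel_left _ (hpos e).ne'
  have hc0 : 0 < c := by
    have := hpos g
    rw [hc] at this
    exact pos_of_mul_pos_right this (hpos e).le
  have hpos' : G'.Positive := by
    intro x
    by_cases hx : x = g
    · rw [hx, hlg]; exact mul_pos hc0 (hpos _)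
    · rw [hl x hx]; exact hpos x
  have hbar : ∀ x, x ≠ e ∧ x ≠ G.bar e → G.bar x ≠ e ∧ G.bar x ≠ G.bar e := fun x hx =>
    ⟨fun h => hx.2 (by rw [← h, G.bar_bar]), fun h => hx.1 (hbinj _ _ h)⟩
  have hbarg : ∀ x, x ≠ g ∧ x ≠ G.bar g → G.bar x ≠ g ∧ G.bar x ≠ G.bar g := fun x hx =>
    ⟨fun h => hx.2 (by rw [← h, G.bar_bar]), fun h => hx.1 (hbinj _ _ h)⟩
  obtain ⟨p, y, r, hlpr, hy, hp⟩ := LGraph.first_split (fun x => x = g ∨ x = G.bar g) l (by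
    rcases hg with h | h
    · exact ⟨_, h, Or.inl rfl⟩
    · exact ⟨_, h, Or.inr rfl⟩)
  have hp' : ∀ x ∈ p, x ≠ g ∧ x ≠ G.bar g := fun x hx => not_or.1 (hp x hx)
  have hpe : ∀ x ∈ p, x ≠ e ∧ x ≠ G.bar e := fun x hx => hav x (by simp [hlpr, hx])
  obtain ⟨N, hN, k, hk, -⟩ := G.W_split (hlpr ▸ hW)
  have hN' : G'.W (G.lab (G.bar e)) p N := by
    refine LGraph.W_congr G G' hN (fun x hx => ?_)
    rw [hb]
    exact ⟨hl _ (hp' x hx).1, hl _ (hbarg x (hp' x hx)).1⟩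
  by_cases hkc : k * c = 1
  · have hc1 : c = 1 := by
      rcases Int.eq_one_or_neg_one_of_mul_eq_one' hkc with h | h <;> omega
    have hk1 : k = 1 := by rw [hc1] at hkc; omega
    rw [hc1, mul_one] at hc
    rw [hc1, one_mul] at hlg
    rw [hk1, one_mul] at hk
    rw [hk] at hN'
    rcases hy with rfl | rfl
    · refine ⟨l.flatMap (G.sub y (G.rev p ++ [y])), e, (G'.smc_iff hpos' _ _).2 ⟨?_, m, hm, ?_⟩⟩
      · intro a ha
        rw [hb]
        rcases G.mem_sub _ _ _ _ ha with h | h | h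
        · rcases List.mem_append.1 h with h | h
          · have := hbar _ (hpe _ ((G.mem_rev _ _).1 h))
            rwa [G.bar_bar] at this
          · rw [List.mem_singleton.1 h]
            exact ⟨hne.symm, hbe.symm⟩
        · rcases List.mem_append.1 h with h | h
          · have := (hpe _ ((G.mem_rev _ _).1 h))
            rwa [G.bar_bar] at this
          · have := hbar (G.bar a) (by
              rw [List.mem_singleton.1 h]
              exact ⟨hne.symm, hbe.symm⟩)
            rwa [G.bar_bar] at this
        · exact hav a h.1
      · rw [hb, hl _ hbe, hl _ hne]
        refine LGraph.W_sub G G' hb y _ hl ?_ hW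
        refine LGraph.W_append G' (LGraph.W_rev G' hN') ?_
        have := G'.W_single y
        rw [hb, hlg, hl _ (G.bar_ne y)] at this
        exact this
    · have hbg : G'.lab (G.bar g) = G.lab (G.bar g) := hl _ (G.bar_ne g)
      have hE := G'.W_single e
      rw [hb, hl _ hbe, hl _ hne] at hE
      refine ⟨G.rev p ++ (l.flatMap (G.sub g ([e] ++ p)) ++ [e]), g,
        (G'.smc_iff hpos' _ _).2 ⟨?_, m, hm, ?_⟩⟩
      · intro a ha
        rw [hb]
        have hgoal : ∀ z, z ∈ [e] ++ p → z ≠ g ∧ z ≠ G.bar g := by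
          intro z hz
          rcases List.mem_append.1 hz with h | h
          · rw [List.mem_singleton.1 h]; exact ⟨hne, hne'⟩
          · exact hp' z h
        rcases List.mem_append.1 ha with h | h
        · have := hbarg _ (hp' _ ((G.mem_rev _ _).1 h))
          rwa [G.bar_bar] at this
        rcases List.mem_append.1 h with h | h
        · rcases G.mem_sub _ _ _ _ h with h | h | h
          · exact hgoal _ h
          · have := hbarg _ (hgoal _ h)
            rwa [G.bar_bar] at this
          · exact h.2
        · rw [List.mem_singleton.1 h]; exact ⟨hne, hne'⟩
      · rw [hb, hbg, hlg]
        refine LGraph.W_append G' (LGraph.W_rev G' hN') (LGraph.W_append G' (M := m * G.lab e) ?_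
          (LGraph.W_scale G' m hE))
        refine LGraph.W_sub G G' hb g _ hl ?_ hW
        rw [hc]
        exact LGraph.W_append G' hE hN'
  · rcases hy with rfl | rfl
    · refine ⟨p, e, (G'.smc_iff hpos' _ _).2 ⟨hpe, k * c, hkc, ?_⟩⟩
      rw [hb, hl _ hbe, hl _ hne]
      have : k * c * G.lab e = N := by rw [hk, hc]; ring
      rw [this]; exact hN'
    · refine ⟨p, G.bar g, (G'.smc_iff hpos' _ _).2 ⟨?_, k * c, hkc, ?_⟩⟩
      · intro a ha
        rw [hb, G.bar_bar]
        exact (hp' a ha).symm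
      · rw [hb, G.bar_bar, hlg, hl _ (G.bar_ne g)]
        have : k * c * G.lab (G.bar g) = c * N := by rw [hk]; ring
        rw [this]; exact LGraph.W_scale G' c hN'
end

section
/- Let Γ be a labeled graph with all labels positive, e an oriented edge, and A = (e₁,…,eₛ) an e-edge path. Suppose σ = (eᵢ,…,eⱼ), for some 1 ≤ i ≤ j ≤ s, is a redundant subcycle of A, i.e. o(eᵢ) = t(eⱼ) and q(eᵢ,…,eⱼ) = 1. Then A∖σ := (e₁,…,eᵢ₋₁,eⱼ₊₁,…,eₛ) is again an e-edge path, and sliding e over A produces the same labeled graph as sliding e over A∖σ. -/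
namespace LGraph

/-- Recursive form of `e`-edge paths, started at the vertex `v` with current label `r`. -/
def SPath {V E : Type} (G : LGraph V E) (e : E) : V → ℚ → List E → Prop
  | _, _, [] => True
  | v, r, f :: l => (f ≠ e ∧ f ≠ G.bar e) ∧ G.o f = v ∧ (∃ k : ℤ, r = (k : ℚ) * (G.lab f : ℚ)) ∧
      SPath G e (G.t f) (r * G.qe f) l

/-- End vertex of a path started at `v`. -/
def endV {V E : Type} (G : LGraph V E) : V → List E → V
  | v, [] => v
  | _, f :: l => endV G (G.t f) l

theorem q_nil {V E : Type} (G : LGraph V E) : G.q [] = 1 := rfl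

theorem q_cons {V E : Type} (G : LGraph V E) (f : E) (l : List E) :
    G.q (f :: l) = G.qe f * G.q l := by simp [q]

theorem q_append {V E : Type} (G : LGraph V E) (l m : List E) :
    G.q (l ++ m) = G.q l * G.q m := by simp [q]

theorem endV_append {V E : Type} (G : LGraph V E) (l m : List E) (v : V) :
    G.endV v (l ++ m) = G.endV (G.endV v l) m := by
  induction l generalizing v with
  | nil => rfl
  | cons f l ih => exact ih _

theorem endV_eq {V E : Type} (G : LGraph V E) (e : E) (l : List E) (hl : l ≠ []) (v : V) :
    G.endV v l = G.t (l.getLastD e) := by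
  induction l generalizing v e with
  | nil => exact absurd rfl hl
  | cons f l ih =>
    cases l with
    | nil => rfl
    | cons g l => exact ih f (by simp) (G.t f)

theorem sPath_append {V E : Type} (G : LGraph V E) (e : E) (l m : List E) (v : V) (r : ℚ) :
    G.SPath e v r (l ++ m) ↔
      G.SPath e v r l ∧ G.SPath e (G.endV v l) (r * G.q l) m := by
  induction l generalizing v r with
  | nil => simp [SPath, endV, q_nil]
  | cons f l ih =>
    simp only [List.cons_append, SPath, endV, ih, q_cons, mul_assoc, and_assoc]

theorem sPath_iff {V E : Type} (G : LGraph V E) (e : E) (l : List E) (v : V) (r : ℚ) :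
    G.SPath e v r l ↔ (G.IsEdgePath l ∧
  (∀ a ∈ l, a ≠ e ∧ a ≠ G.bar e) ∧
  (∀ a ∈ l.head?, G.o a = v) ∧
  ∀ i : Fin l.length, ∃ k : ℤ,
    r * G.q (l.take i.1) = (k : ℚ) * (G.lab (l.get i) : ℚ)) := by
  induction l generalizing v r with
  | nil => simp [SPath, IsEdgePath, List.Chain']
  | cons f l ih =>
    have h1 : G.IsEdgePath (f :: l) ↔ (∀ a ∈ l.head?, G.o a = G.t f) ∧ G.IsEdgePath l := by
      unfold IsEdgePath List.Chain'
      rw [List.isChain_cons]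
      simp only [eq_comm]
    have h2 : (∀ i : Fin (f :: l).length, ∃ k : ℤ,
        r * G.q ((f :: l).take i.1) = (k : ℚ) * (G.lab ((f :: l).get i) : ℚ)) ↔
        (∃ k : ℤ, r = (k : ℚ) * (G.lab f : ℚ)) ∧ ∀ i : Fin l.length, ∃ k : ℤ,
          r * G.qe f * G.q (l.take i.1) = (k : ℚ) * (G.lab (l.get i) : ℚ) := by
      refine (Fin.forall_fin_succ (n := l.length)).trans ?_
      simp [q_nil, q_cons, mul_assoc]
    rw [h1, h2]
    simp only [SPath, ih, List.forall_mem_cons, List.head?_cons, Option.mem_def,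
      Option.some.injEq, forall_eq']
    tauto

theorem slide_t {V E : Type} (G : LGraph V E) (e f g : E) (h : g ≠ G.bar e) :
    (G.slide e f).t g = G.t g := by
  have : G.bar g ≠ e := fun hh => h (by rw [← hh, G.bar_bar])
  simp [t, slide, this]

theorem slide_qe {V E : Type} (G : LGraph V E) (e f g : E) (h' : g ≠ e) (h : g ≠ G.bar e) :
    (G.slide e f).qe g = G.qe g := by
  have : G.bar g ≠ e := fun hh => h (by rw [← hh, G.bar_bar])
  simp [qe, slide, this, h']

theorem slide_transfer {V E : Type} (G : LGraph V E) (e f : E) (l : List E) (v : V) (r : ℚ)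
    (h : G.SPath e v r l) :
    (G.slide e f).SPath e v r l ∧ (G.slide e f).endV v l = G.endV v l ∧
      (G.slide e f).q l = G.q l := by
  induction l generalizing v r with
  | nil => exact ⟨trivial, rfl, rfl⟩
  | cons g l ih =>
    obtain ⟨⟨h1, h2⟩, h3, h4, h5⟩ := h
    obtain ⟨i1, i2, i3⟩ := ih _ _ h5
    have ht := G.slide_t e f g h2
    have hqe := G.slide_qe e f g h1 h2
    refine ⟨⟨⟨h1, h2⟩, ?_, ?_, ?_⟩, ?_, ?_⟩
    · simpa [slide, h1] using h3
    · simpa [slide, h1] using h4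
    · rw [ht, hqe]; exact i1
    · simp only [endV, ht, i2]
    · rw [q_cons, q_cons, hqe, i3]

theorem slidePath_spec {V E : Type} (e : E) (l : List E) (G : LGraph V E)
    (h : G.SPath e (G.o e) (G.lab e) l) :
    (G.slidePath e l).bar = G.bar ∧ (G.slidePath e l).o e = G.endV (G.o e) l ∧
      ((G.slidePath e l).lab e : ℚ) = G.lab e * G.q l ∧
      ∀ x, x ≠ e → (G.slidePath e l).o x = G.o x ∧ (G.slidePath e l).lab x = G.lab x := by
  induction l generalizing G with
  | nil => simp [slidePath, endV, q_nil]
  | cons f l ih =>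
    obtain ⟨⟨h1, h2⟩, h3, ⟨k, hk⟩, h5⟩ := h
    have ho : (G.slide e f).o e = G.t f := by simp [slide]
    have hl : ((G.slide e f).lab e : ℚ) = G.lab e * G.qe f := by
      have hk' : G.lab e = k * G.lab f := by exact_mod_cast hk
      simp only [slide, if_true, qe]
      by_cases h0 : G.lab f = 0
      · simp [h0]
      · have h0' : (G.lab f : ℚ) ≠ 0 := by exact_mod_cast h0
        have : G.lab e * G.lab (G.bar f) / G.lab f = k * G.lab (G.bar f) := by
          rw [hk', mul_right_comm, Int.mul_ediv_cancel _ h0]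
        rw [this, hk]
        push_cast
        field_simp
    obtain ⟨t1, t2, t3⟩ := G.slide_transfer e f l _ _ h5
    rw [← ho, ← hl] at t1
    obtain ⟨i1, i2, i3, i4⟩ := ih _ t1
    refine ⟨i1, ?_, ?_, ?_⟩
    · simp only [slidePath, endV]; rw [i2, ho, t2]
    · simp only [slidePath]; rw [i3, hl, t3, q_cons, mul_assoc]
    · intro x hx
      have := i4 x hx
      have h1 : (G.slide e f).o x = G.o x := by simp [slide, hx]
      have h2 : (G.slide e f).lab x = G.lab x := by simp [slide, hx]
      rw [h1, h2] at this
      exact this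

theorem ext_fields {V E : Type} (G H : LGraph V E) (h1 : G.o = H.o) (h2 : G.bar = H.bar)
    (h3 : G.lab = H.lab) : G = H := by
  cases G; cases H; simp_all

end LGraph

/-- Removing a redundant subcycle `σ` (a nonempty subcycle with
`o(eᵢ) = t(eⱼ)` and `q(σ) = 1`) from an `e`-edge path `A = A₁ ++ σ ++ A₂` again yields an
`e`-edge path, and sliding `e` over `A` produces the same labeled graph as sliding `e`
over `A₁ ++ A₂`. -/
theorem stmt7 {V E : Type} [Finite V] [Finite E] (G : LGraph V E)
    (hpos : G.Positive)
    (e : E) (A₁ σ A₂ : List E)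
    (hA : G.IsEEdgePath e (A₁ ++ σ ++ A₂))
    (hσne : σ ≠ [])
    (hcyc : G.o (σ.headD e) = G.t (σ.getLastD e))
    (hq : G.q σ = 1) :
    G.IsEEdgePath e (A₁ ++ A₂) ∧
      G.slidePath e (A₁ ++ σ ++ A₂) = G.slidePath e (A₁ ++ A₂) := by
  have key : ∀ l, G.IsEEdgePath e l ↔ G.SPath e (G.o e) (G.lab e) l :=
    fun l => (G.sPath_iff e l _ _).symm
  rw [key] at hA ⊢
  have hA' := hA
  rw [LGraph.sPath_append, LGraph.sPath_append, LGraph.endV_append, LGraph.q_append, hq,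
    mul_one] at hA'
  obtain ⟨⟨a1, a2⟩, a3⟩ := hA'
  have hend : G.endV (G.endV (G.o e) A₁) σ = G.endV (G.o e) A₁ := by
    rw [G.endV_eq e σ hσne, ← hcyc]
    cases σ with
    | nil => exact absurd rfl hσne
    | cons f l => exact a2.2.1
  rw [hend] at a3
  have hB : G.SPath e (G.o e) (G.lab e) (A₁ ++ A₂) := (G.sPath_append e _ _ _ _).2 ⟨a1, a3⟩
  refine ⟨hB, ?_⟩
  obtain ⟨i1, i2, i3, i4⟩ := LGraph.slidePath_spec e _ G hA
  obtain ⟨j1, j2, j3, j4⟩ := LGraph.slidePath_spec e _ G hB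
  apply LGraph.ext_fields
  · funext x
    by_cases hx : x = e
    · subst hx
      rw [i2, j2, LGraph.endV_append, LGraph.endV_append, hend, LGraph.endV_append]
    · rw [(i4 x hx).1, (j4 x hx).1]
  · rw [i1, j1]
  · funext x
    by_cases hx : x = e
    · subst hx
      have : ((G.slidePath x (A₁ ++ σ ++ A₂)).lab x : ℚ) = (G.slidePath x (A₁ ++ A₂)).lab x := by
        rw [i3, j3, LGraph.q_append, LGraph.q_append, hq, LGraph.q_append, mul_one]
      exact_mod_cast this
    · rw [(i4 x hx).2, (j4 x hx).2]
end

section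
/- Let Γ be a reduced, non-ascending labeled graph with all labels positive, and let e, f be mobile edges of Γ with f ∉ {e, ē}. Then it is impossible that e can slide over f in Γ (yielding a reduced labeled graph Γ′) and that, in Γ′, f can then slide over ē. -/
namespace LGraph

variable {V E : Type}

/-- Carrying the label `c` from `u` along `l` avoiding `e`, arriving at `w` with label `d`. -/
def Walk (G : LGraph V E) (e : E) : V → ℤ → List E → V → ℤ → Prop
  | u, c, [], w, d => u = w ∧ c = d
  | u, c, f :: l, w, d => f ≠ e ∧ f ≠ G.bar e ∧ G.o f = u ∧ G.lab f ∣ c ∧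
      Walk G e (G.t f) (c * G.lab (G.bar f) / G.lab f) l w d

theorem walk_congr (G H : LGraph V E) (e : E) (hb : H.bar = G.bar)
    (ho : ∀ x, x ≠ e → x ≠ G.bar e → H.o x = G.o x)
    (hl : ∀ x, x ≠ e → x ≠ G.bar e → H.lab x = G.lab x)
    (l : List E) : ∀ (u : V) (c : ℤ) (w : V) (d : ℤ), G.Walk e u c l w d → H.Walk e u c l w d := by
  induction l with
  | nil => intro u c w d h; exact h
  | cons f l ih =>
    rintro u c w d ⟨h1, h2, h3, h4, h5⟩
    have b1 : G.bar f ≠ e := fun h => h2 (by rw [← h, G.bar_bar])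
    have b2 : G.bar f ≠ G.bar e := fun h => h1 (by rw [← G.bar_bar f, h, G.bar_bar])
    refine ⟨h1, by rw [hb]; exact h2, by rw [ho f h1 h2]; exact h3,
      by rw [hl f h1 h2]; exact h4, ?_⟩
    have ht : H.t f = G.t f := by unfold t; rw [hb, ho _ b1 b2]
    rw [ht, hb, hl f h1 h2, hl _ b1 b2]
    exact ih _ _ _ _ h5

theorem walk_of_path (G : LGraph V E) (hpos : G.Positive) (e : E) (w : V) (d : ℤ) (l : List E) :
    ∀ (u : V) (c : ℤ), G.IsEdgePath l → (∀ a ∈ l, a ≠ e ∧ a ≠ G.bar e) →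
      (∀ a ∈ l.head?, G.o a = u) →
      (∀ i : Fin l.length, ∃ k : ℤ,
        (c : ℚ) * G.q (l.take i.1) = (k : ℚ) * (G.lab (l.get i) : ℚ)) →
      (l = [] → u = w) → (∀ x ∈ l.getLast?, G.t x = w) → (c : ℚ) * G.q l = d →
      G.Walk e u c l w d := by
  induction l with
  | nil =>
    intro u c _ _ _ _ h _ hd
    refine ⟨h rfl, ?_⟩
    simp [q] at hd
    exact_mod_cast hd
  | cons f l ih =>
    intro u c hch hav hhd hdiv _ hlast hd
    have hf : (G.lab f : ℚ) ≠ 0 := by exact_mod_cast (hpos f).ne'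
    have hfz : G.lab f ≠ 0 := (hpos f).ne'
    have hdvd : G.lab f ∣ c := by
      obtain ⟨k, hk⟩ := hdiv ⟨0, by simp⟩
      simp [q] at hk
      refine ⟨k, ?_⟩
      have : c = k * G.lab f := by exact_mod_cast hk
      rw [this, mul_comm]
    have hc' : ((c * G.lab (G.bar f) / G.lab f : ℤ) : ℚ) = c * G.qe f := by
      rw [Int.cast_div (Dvd.dvd.mul_right hdvd _) hf]
      unfold qe; push_cast; ring
    have hq : ∀ l', G.q (f :: l') = G.qe f * G.q l' := by intro l'; simp [q]
    refine ⟨(hav f (by simp)).1, (hav f (by simp)).2, hhd f (by simp), hdvd, ?_⟩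
    apply ih
    · exact List.IsChain.tail hch
    · intro a ha; exact hav a (by simp [ha])
    · intro a ha
      cases l with
      | nil => simp at ha
      | cons b l =>
        simp at ha
        subst ha
        unfold IsEdgePath at hch
        exact (List.IsChain.rel_head hch).symm
    · intro i
      obtain ⟨k, hk⟩ := hdiv ⟨i.1 + 1, by simp⟩
      refine ⟨k, ?_⟩
      rw [hc']
      simp only [List.take_succ_cons, hq] at hk
      rw [mul_assoc]
      simpa using hk
    · intro h
      subst h
      exact hlast f (by simp)
    · intro x hx
      apply hlast x
      cases l with
      | nil => simp at hx
      | cons b l => simpa using hx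
    · rw [hc', ← hd, hq, mul_assoc]

theorem Isom.rfl' (G : LGraph V E) : Isom G G :=
  ⟨id, id, Function.bijective_id, Function.bijective_id, fun _ => rfl, fun _ => rfl, fun _ => rfl⟩

theorem nonAscending_slide (G : LGraph V E) (hna : G.NonAscending) (e f : E)
    (hs : G.CanSlide e f) (hr : (G.slide e f).Reduced) : (G.slide e f).NonAscending := by
  intro Y hY
  exact hna Y (Relation.ReflTransGen.head
    (b := (⟨V, E, G.slide e f⟩ : BGraph)) ⟨Or.inl ⟨e, f, hs, Isom.rfl' _⟩, hr⟩ hY)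

theorem noLoop (G : LGraph V E) (hna : G.NonAscending) (e : E) (h : G.o e = G.t e)
    (h1 : G.lab e = 1) : G.lab (G.bar e) = 1 := by
  by_contra h2
  exact hna ⟨V, E, G⟩ Relation.ReflTransGen.refl ⟨e, h, h1, h2⟩

/-- A walk with label one stays put. -/
theorem walk_one (G : LGraph V E) (hpos : G.Positive) (hred : G.Reduced) (hna : G.NonAscending)
    (e : E) (w : V) (d : ℤ) (l : List E) : ∀ u, G.Walk e u 1 l w d → u = w := by
  induction l with
  | nil => intro u h; exact h.1
  | cons f l ih =>
    rintro u ⟨h1, h2, h3, h4, h5⟩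
    have hf : G.lab f = 1 := Int.eq_one_of_dvd_one (hpos f).le h4
    have hl := hred f hf
    have hb := noLoop G hna f hl hf
    rw [hf, hb, ← hl, h3] at h5
    exact ih u (by simpa using h5)

open Classical in
/-- The inverse A-move at a loop `e`. -/
noncomputable def expand (G : LGraph V E) (e : E) (a : ℤ) : LGraph (Option V) (E ⊕ Bool) where
  o := Sum.elim (fun x => if x = e ∨ x = G.bar e then none else some (G.o x))
    (fun b => if b then none else some (G.o e))
  bar := Sum.elim (fun x => Sum.inl (G.bar x)) (fun b => Sum.inr (!b))
  bar_bar := by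
    rintro (x | b)
    · simp [G.bar_bar]
    · simp
  bar_ne := by
    rintro (x | b)
    · simpa using G.bar_ne x
    · simp
  lab := Sum.elim (fun x => if x = G.bar e then 1 else if x = e then a else G.lab x)
    (fun b => if b then a else G.lab (G.bar e))

theorem loop_eq (G : LGraph V E) (hred : G.Reduced)
    (hna : G.NonAscending) (e : E) (h : G.o e = G.t e) (hd : G.lab (G.bar e) ∣ G.lab e) :
    G.lab e = G.lab (G.bar e) := by
  by_contra hne
  obtain ⟨a, ha⟩ := hd
  have ha1 : a ≠ 1 := by rintro rfl; apply hne; rw [ha, mul_one]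
  have hbe : G.bar e ≠ e := G.bar_ne e
  have hbe' : e ≠ G.bar e := hbe.symm
  have hbar : ∀ x, (G.bar x = e ↔ x = G.bar e) := fun x =>
    ⟨fun h => by rw [← h, G.bar_bar], fun h => by rw [h, G.bar_bar]⟩
  have hbar2 : ∀ x, (G.bar x = G.bar e ↔ x = e) := fun x =>
    ⟨fun h => by rw [← G.bar_bar x, h, G.bar_bar], fun h => by rw [h]⟩
  have hn1 : G.lab (G.bar e) ≠ 1 := by
    intro h1
    have := noLoop G hna (G.bar e) (by unfold t at *; rw [G.bar_bar]; exact h.symm) h1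
    rw [G.bar_bar] at this
    exact hne (this.trans h1.symm)
  have hH : (G.expand e a).Reduced := by
    rintro (x | b) hx
    · by_cases hx1 : x = e
      · subst hx1; simp [expand, t]
      by_cases hx2 : x = G.bar e
      · subst hx2; simp [expand, t, G.bar_bar]
      simp [expand, hx1, hx2] at hx
      have := hred x hx
      simp [expand, t, hx1, hx2, hbar, hbar2] at this ⊢
      exact this
    · cases b <;> simp [expand] at hx
      · exact absurd hx hn1
      · exact absurd hx ha1
  refine hna ⟨_, _, G.expand e a⟩ (Relation.ReflTransGen.single ⟨?_, hH⟩)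
    ⟨Sum.inl (G.bar e), ?_, ?_, ?_⟩
  · refine Or.inr (Or.inr (Or.inr (Or.inr ?_)))
    refine ⟨Sum.inl (G.bar e), Sum.inr true, G.bar e, fun v => v.getD (G.o e),
      Sum.elim id (fun _ => e), ?_, ?_, ?_, ?_, ?_, ?_, ?_, ?_, ?_, ?_, ?_, ?_, ?_, ?_, ?_, ?_, ?_, ?_⟩
    · simp [expand, t, G.bar_bar]
    · simp [expand]
    · simpa [expand, G.bar_bar, hbe'] using ha1
    · simp [expand]
    · simp [expand, t]
    · simpa [expand] using ha1
    · simpa [expand] using hn1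
    · simp [expand, G.bar_bar, hbe']
    · rintro (x | b) hx
      · simp only [expand, Sum.elim_inl, or_true, if_true] at hx
        by_cases h1 : x = e
        · right; left; simp [expand, h1, G.bar_bar]
        · by_cases h2 : x = G.bar e
          · left; rw [h2]
          · simp [h1, h2] at hx
      · cases b
        · simp [expand] at hx
        · simp
    · simpa [expand, t] using h.symm
    · simp [expand, t, G.bar_bar]
    · simp [expand]
    · simp [expand, G.bar_bar, hbe', ha]
    · rintro (_ | w1) (_ | w2) h1 h2 h3 <;> simp_all [expand]
    · intro v
      exact ⟨some v, by simp [expand], rfl⟩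
    · rintro (x | b) h1 h2 h3 h4
      · have h1' : x ≠ G.bar e := fun h => h1 (by rw [h])
        have h2' : x ≠ e := fun h => h2 (by simp [expand, h, G.bar_bar])
        simp [expand, h1', h2', G.bar_bar]
      · cases b
        · simp [expand] at h4
        · simp at h3
    · rintro (x | b) (y | b') h1 h2 h3 h4 h5 h6 h7 h8 h9
      · exact congrArg _ h9
      · cases b' <;> simp [expand] at h7 h8
      · cases b <;> simp [expand] at h3 h4
      · cases b <;> simp [expand] at h3 h4
    · intro y h1 h2
      rw [G.bar_bar] at h2
      exact ⟨Sum.inl y, by simpa using h1, by simpa [expand, G.bar_bar] using h2,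
        by simp, by simp [expand], rfl⟩
  · simp [expand, t, G.bar_bar]
  · simp [expand]
  · simpa [expand, G.bar_bar, hbe'] using ha1

theorem walk_main (e : E) (d : ℤ) (l : List E) : ∀ (G : LGraph V E), G.Positive → G.Reduced →
    G.NonAscending → G.Walk e (G.o e) (G.lab e) l (G.t e) d → G.lab (G.bar e) ∣ d →
    d = G.lab (G.bar e) := by
  induction l with
  | nil =>
    rintro G hpos hred hna ⟨h1, h2⟩ hd
    rw [← h2] at hd ⊢
    exact loop_eq G hred hna e h1 hd
  | cons f l ih =>
    rintro G hpos hred hna ⟨h1, h2, h3, h4, h5⟩ hd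
    have hs : G.CanSlide e f := ⟨h1, h2, h3, h4⟩
    have hbe : G.bar e ≠ e := G.bar_ne e
    have oe : (G.slide e f).o e = G.t f := by simp [slide]
    have le : (G.slide e f).lab e = G.lab e * G.lab (G.bar f) / G.lab f := by simp [slide]
    have ox : ∀ x, x ≠ e → (G.slide e f).o x = G.o x := by intro x hx; simp [slide, hx]
    have lx : ∀ x, x ≠ e → (G.slide e f).lab x = G.lab x := by intro x hx; simp [slide, hx]
    have hb : (G.slide e f).bar = G.bar := rfl
    have te : (G.slide e f).t e = G.t e := by unfold t; rw [hb, ox _ hbe]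
    have hpos' : (G.slide e f).Positive := by
      intro x
      by_cases hx : x = e
      · subst hx
        rw [le]
        exact Int.ediv_pos_of_pos_of_dvd (mul_pos (hpos _) (hpos _)) (hpos f).le
          (Dvd.dvd.mul_right h4 _)
      · rw [lx x hx]; exact hpos x
    have key1 : (G.slide e f).lab e = 1 → (G.slide e f).o e = (G.slide e f).t e := by
      intro hx
      rw [oe, te]
      rw [le] at hx
      rw [hx] at h5
      exact walk_one G hpos hred hna e _ _ l _ h5
    have key2 : G.lab (G.bar e) = 1 → G.t f = G.t e := by
      intro hx
      have hl := hred _ hx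
      have he := noLoop G hna _ hl hx
      unfold t at hl
      rw [G.bar_bar] at he hl
      rw [he] at h4
      have hf : G.lab f = 1 := Int.eq_one_of_dvd_one (hpos f).le h4
      rw [← hred f hf, h3, ← hl]
      rfl
    have hred' : (G.slide e f).Reduced := by
      intro x hx
      by_cases hxe : x = e
      · subst hxe; exact key1 hx
      by_cases hxb : x = G.bar e
      · subst hxb
        rw [lx _ hxe] at hx
        have := key2 hx
        rw [ox _ hxe]
        unfold t at this ⊢
        rw [hb, G.bar_bar, oe]
        exact this.symm
      · have b1 : G.bar x ≠ e := fun h => hxb (by rw [← h, G.bar_bar])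
        rw [lx x hxe] at hx
        have := hred x hx
        unfold t at this ⊢
        rw [hb, ox x hxe, ox _ b1, this]
    have hw : (G.slide e f).Walk e (G.t f) (G.lab e * G.lab (G.bar f) / G.lab f) l (G.t e) d :=
      walk_congr G (G.slide e f) e rfl (fun x hx _ => ox x hx) (fun x hx _ => lx x hx) l _ _ _ _ h5
    have := ih (G.slide e f) hpos' hred' (nonAscending_slide G hna e f hs hred')
      (by rw [oe, le, te]; exact hw) (by rw [hb, lx _ hbe]; exact hd)
    rw [this, hb, lx _ hbe]

/-- A loop with equal labels carries no strict integer cycle. -/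
theorem no_cycle (G : LGraph V E) (hpos : G.Positive) (hred : G.Reduced) (hna : G.NonAscending)
    (e : E) (hl : G.o e = G.t e) (heq : G.lab e = G.lab (G.bar e)) (l : List E)
    (hp : G.IsEEdgePath e l) (hlast : ∀ x ∈ l.getLast?, G.t x = G.o e)
    (k : ℤ) (hk : G.q l = k) : G.q l = 1 := by
  obtain ⟨h1, h2, h3, h4⟩ := hp
  have hw := walk_of_path G hpos e (G.t e) (G.lab e * k) l (G.o e) (G.lab e) h1 h2 h3 h4
    (fun _ => hl) (fun x hx => (hlast x hx).trans hl) (by rw [hk]; push_cast; rfl)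
  have := walk_main e _ l G hpos hred hna hw (by rw [heq]; exact dvd_mul_right _ _)
  rw [← heq] at this
  have hk1 : k = 1 := by
    have h0 := (hpos e).ne'
    exact mul_left_cancel₀ h0 (by rw [this, mul_one])
  rw [hk, hk1]; simp

theorem no_mono (G : LGraph V E) (hpos : G.Positive) (hred : G.Reduced) (hna : G.NonAscending)
    (e : E) (hl : G.o e = G.t e) (heq : G.lab e = G.lab (G.bar e)) (l : List E) :
    ¬ G.IsStrictMonotoneCycle l e := by
  rintro ⟨⟨hp, hlast, k, hk⟩, hne⟩
  have hqe : G.qe e = 1 := by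
    unfold qe; rw [heq]; exact div_self (by exact_mod_cast (hpos _).ne')
  have hq : G.q (l ++ [e]) = G.q l := by simp [q, hqe]
  rw [hq] at hk hne
  refine hne (no_cycle G hpos hred hna (G.bar e) ?_ ?_ l hp ?_ k hk)
  · unfold t at *; rw [G.bar_bar, hl]
  · rw [G.bar_bar, heq]
  · intro x hx
    rw [List.getLastD_eq_getLast?, Option.mem_def.1 hx] at hlast
    exact hlast.trans hl

theorem no_int (G : LGraph V E) (hpos : G.Positive) (hred : G.Reduced) (hna : G.NonAscending)
    (e : E) (hl : G.o e = G.t e) (heq : G.lab e = G.lab (G.bar e)) (l : List E) :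
    ¬ G.IsStrictIntegerCycle e l := by
  rintro ⟨hp, hnil, hlast, ⟨k, hk⟩, hne⟩
  refine hne (no_cycle G hpos hred hna e hl heq l hp ?_ k hk)
  intro x hx
  rw [List.getLastD_eq_getLast?, Option.mem_def.1 hx] at hlast
  cases l with
  | nil => exact absurd rfl hnil
  | cons b l => exact hlast.trans (hp.2.2.1 b (by simp))

end LGraph

/-- (Lemma 4.3(g)) In a reduced non-ascending positively-labeled graph,
for mobile edges `e, f` with `f ∉ {e, ē}`, the slide of `e` over `f` (to a reduced graph)
followed by a slide of `f` over `ē` is impossible. -/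
theorem stmt9 {V E : Type} [Finite V] [Finite E] (G : LGraph V E)
    (hpos : G.Positive) (hred : G.Reduced) (hna : G.NonAscending)
    (e f : E) (hme : G.Mobile e) (hmf : G.Mobile f)
    (hfe : f ≠ e) (hfebar : f ≠ G.bar e) :
    ¬ (G.CanSlide e f ∧ (G.slide e f).Reduced ∧ (G.slide e f).CanSlide f (G.bar e)) := by
  rintro ⟨⟨_, _, h3, h4⟩, _, ⟨_, _, h7, h8⟩⟩
  have hbe : G.bar e ≠ e := G.bar_ne e
  simp only [LGraph.slide, hbe, hfe, if_false] at h7 h8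
  have hl : G.o e = G.t e := by unfold LGraph.t; rw [h7, h3]
  have heq := LGraph.loop_eq G hred hna e hl (h8.trans h4)
  have hl' : G.o (G.bar e) = G.t (G.bar e) := by
    unfold LGraph.t at *; rw [G.bar_bar, hl]
  have heq' : G.lab (G.bar e) = G.lab (G.bar (G.bar e)) := by rw [G.bar_bar, heq]
  rcases hme with ⟨l, h | h⟩ | ⟨l, h | h⟩
  · exact LGraph.no_mono G hpos hred hna e hl heq l h
  · exact LGraph.no_mono G hpos hred hna _ hl' heq' l h
  · exact LGraph.no_int G hpos hred hna e hl heq l h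
  · exact LGraph.no_int G hpos hred hna _ hl' heq' l h
end

section
/- Let Γ be a reduced, non-ascending labeled graph with all labels positive, and let e, f be mobile edges of Γ with f ∉ {e, ē}. Then it is impossible that e can slide over f in Γ (yielding a reduced labeled graph Γ′) and that, in Γ′, f̄ can then slide over ē. -/
namespace LGraph

variable {V E : Type}

open Classical in
/-- Blow up the loop `e` (labels `b`, `b * n`) by an inverse A-move. -/
noncomputable def blow (G : LGraph V E) (e : E) (n : ℤ) : LGraph (Option V) (E ⊕ Bool) where
  o := fun x => match x with
    | Sum.inl x => if x = e ∨ x = G.bar e then none else some (G.o x)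
    | Sum.inr true => none
    | Sum.inr false => some (G.o e)
  bar := fun x => match x with
    | Sum.inl x => Sum.inl (G.bar x)
    | Sum.inr b => Sum.inr (!b)
  bar_bar := by
    intro x
    rcases x with x | x
    · simp [G.bar_bar]
    · simp
  bar_ne := by
    intro x
    rcases x with x | x
    · simp [G.bar_ne]
    · simp
  lab := fun x => match x with
    | Sum.inl x => if x = e then 1 else if x = G.bar e then n else G.lab x
    | Sum.inr true => n
    | Sum.inr false => G.lab e

lemma bar_eq_iff (G : LGraph V E) (x y : E) : G.bar x = y ↔ x = G.bar y := by
  constructor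
  · rintro rfl; rw [G.bar_bar]
  · rintro rfl; rw [G.bar_bar]

lemma bar_inj (G : LGraph V E) (x y : E) : G.bar x = G.bar y ↔ x = y := by
  rw [bar_eq_iff, G.bar_bar]

/-- In a non-ascending graph there is no loop with labels `b, b * n` with `n ≠ 1`. -/
lemma no_loop (G : LGraph V E) (hred : G.Reduced) (hna : G.NonAscending) (e : E) (n : ℤ)
    (hn : n ≠ 1) (hloop : G.o e = G.t e) (hlab : G.lab (G.bar e) = G.lab e * n) : False := by
  by_cases hb : G.lab e = 1
  · refine hna ⟨V, E, G⟩ Relation.ReflTransGen.refl ⟨e, hloop, hb, ?_⟩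
    rw [hlab, hb, one_mul]; exact hn
  have hbe := G.bar_ne e
  have hasc : (G.blow e n).HasStrictAscendingLoop :=
    ⟨Sum.inl e, by simp [blow, t], by simp [blow], by simpa [blow, hbe] using hn⟩
  refine hna ⟨Option V, E ⊕ Bool, G.blow e n⟩ (Relation.ReflTransGen.single ⟨?_, ?_⟩) hasc
  · refine Or.inr (Or.inr (Or.inr (Or.inr ?_)))
    refine ⟨Sum.inl e, Sum.inr true, e, fun x => x.getD (G.o e),
      fun x => match x with | Sum.inl x => x | Sum.inr _ => e, ?_, ?_, ?_, ?_, ?_, ?_, ?_, ?_, ?_,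
      ?_, ?_, ?_, ?_, ?_, ?_, ?_, ?_, ?_⟩
    · simp [blow, t]
    · simp [blow]
    · simpa [blow, hbe] using hn
    · simp [blow]
    · simp [blow, t]
    · simpa [blow] using hn
    · simpa [blow] using hb
    · simp [blow, hbe]
    · rintro (x | x) hx
      · by_cases h1 : x = e
        · simp [h1]
        · by_cases h2 : x = G.bar e
          · simp [h2, blow]
          · simp [blow, h1, h2] at hx
      · cases x
        · simp [blow] at hx
        · simp
    · simp [blow, t]
    · simp [blow, t]; exact hloop.symm
    · simp [blow]
    · simp [blow, hbe, hlab]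
    · rintro (_ | w₁) (_ | w₂) h1 h2 h
      · rfl
      · simp [blow] at h1
      · simp [blow] at h2
      · simpa using h
    · intro v'
      exact ⟨some v', by simp [blow], rfl⟩
    · rintro (x | x) h1 h2 h3 h4
      · have h1' : x ≠ e := by simpa using h1
        have h2' : x ≠ G.bar e := by simpa [blow] using h2
        simp [blow, h1', h2']
      · cases x <;> simp [blow] at h3 h4
    · rintro (x | x) (y | y) h1 h2 h3 h4 h5 h6 h7 h8 h
      · simpa using h
      · cases y <;> simp [blow] at h7 h8
      · cases x <;> simp [blow] at h3 h4
      · cases x <;> simp [blow] at h3 h4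
    · intro y h1 h2
      exact ⟨Sum.inl y, by simpa using h1, by simpa [blow] using h2, by simp, by simp [blow], rfl⟩
  · rintro (x | x) hx
    · by_cases h1 : x = e
      · simp [h1, blow, t]
      · by_cases h2 : x = G.bar e
        · subst h2
          simp [blow, hbe] at hx
          exact absurd hx hn
        · have h3 : G.bar x ≠ e := by rwa [Ne, bar_eq_iff]
          have h4 : G.bar x ≠ G.bar e := by rwa [Ne, bar_inj]
          simp [blow, h1, h2] at hx
          have := hred x hx
          simp only [t] at this
          simp [blow, t, h1, h2, h3, h4, this]
    · cases x
      · simp [blow] at hx; exact absurd hx hb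
      · simp [blow] at hx; exact absurd hx hn

open Classical in
/-- Replace the origin and label of `e`. -/
noncomputable def setE (G : LGraph V E) (e : E) (v : V) (x : ℤ) : LGraph V E where
  o := fun z => if z = e then v else G.o z
  bar := G.bar
  bar_bar := G.bar_bar
  bar_ne := G.bar_ne
  lab := fun z => if z = e then x else G.lab z

lemma setE_self (G : LGraph V E) (e : E) : G.setE e (G.o e) (G.lab e) = G := by
  cases G
  simp only [setE, mk.injEq, true_and]
  constructor
  · funext z; split_ifs with h <;> simp [h]
  · funext z; split_ifs with h <;> simp [h]

lemma setE_slide (G : LGraph V E) (e f : E) (v : V) (k : ℤ) (hf : f ≠ e) (hf' : f ≠ G.bar e)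
    (h0 : G.lab f ≠ 0) :
    (G.setE e v (k * G.lab f)).slide e f = G.setE e (G.t f) (k * G.lab (G.bar f)) := by
  have h3 : G.bar f ≠ e := by rwa [Ne, bar_eq_iff]
  simp only [setE, slide, mk.injEq, true_and, t]
  constructor
  · funext z; split_ifs <;> simp_all
  · funext z
    split_ifs with h
    · rw [mul_right_comm, Int.mul_ediv_cancel _ h0]
    · rfl

lemma nonAsc_slide (G : LGraph V E) (hna : G.NonAscending) (e f : E) (h : G.CanSlide e f)
    (hr : (G.slide e f).Reduced) : (G.slide e f).NonAscending := by
  intro Y hY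
  refine hna Y (Relation.ReflTransGen.head ⟨Or.inl ⟨e, f, h, ?_⟩, hr⟩ hY)
  exact ⟨id, id, Function.bijective_id, Function.bijective_id, fun _ => rfl, fun _ => rfl,
    fun _ => rfl⟩

/-- Recursive description of slide paths with integer labels. -/
def SP (G : LGraph V E) (e : E) : V → ℤ → List E → V → ℤ → Prop
  | v, x, [], w, y => v = w ∧ x = y
  | v, x, f :: l, w, y => f ≠ e ∧ f ≠ G.bar e ∧ G.o f = v ∧
      ∃ k : ℤ, x = k * G.lab f ∧ SP G e (G.t f) (k * G.lab (G.bar f)) l w y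

lemma SP_append (G : LGraph V E) (e f : E) (hf : f ≠ e) (hf' : f ≠ G.bar e) (l : List E) :
    ∀ (v : V) (x : ℤ) (w : V) (k : ℤ), G.SP e v x l w (k * G.lab f) → G.o f = w →
      G.SP e v x (l ++ [f]) (G.t f) (k * G.lab (G.bar f)) := by
  induction l with
  | nil =>
    rintro v x w k ⟨rfl, hx⟩ ho
    exact ⟨hf, hf', ho, k, hx, rfl, rfl⟩
  | cons g l ih =>
    rintro v x w k ⟨h1, h2, h3, j, hj, h⟩ ho
    exact ⟨h1, h2, h3, j, hj, ih _ _ _ _ h ho⟩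

lemma SP_one (G : LGraph V E) (hpos : G.Positive) (hred : G.Reduced) (hna : G.NonAscending)
    (e : E) (l : List E) :
    ∀ (v : V) (w : V) (y : ℤ), G.SP e v 1 l w y → y = 1 := by
  induction l with
  | nil => rintro v w y ⟨_, h⟩; exact h.symm
  | cons g l ih =>
    rintro v w y ⟨h1, h2, h3, j, hj, h⟩
    have hg : G.lab g = 1 :=
      Int.eq_one_of_dvd_one (hpos g).le ⟨j, by rw [mul_comm]; exact hj⟩
    have hj1 : j = 1 := by rw [hg] at hj; omega
    have hgb : G.lab (G.bar g) = 1 := by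
      by_contra hc
      exact no_loop G hred hna g _ hc (hred g hg) (by rw [hg, one_mul])
    rw [hj1, hgb] at h
    exact ih _ _ _ (by simpa using h)

lemma setE_reduced (G : LGraph V E) (hred : G.Reduced) (e : E) (v : V) (x : ℤ)
    (hx : x ≠ 1) (hb : G.lab (G.bar e) ≠ 1) : (G.setE e v x).Reduced := by
  intro z hz
  by_cases h1 : z = e
  · simp [setE, h1] at hz; exact absurd hz hx
  · simp [setE, h1] at hz
    have h2 : G.bar z ≠ e := by
      intro h; apply hb; rw [← h, G.bar_bar]; exact hz
    have := hred z hz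
    simp only [t] at this
    simp [setE, t, h1, h2, this]

lemma SP_nonAsc (G : LGraph V E) (hpos : G.Positive) (hred : G.Reduced) (hna : G.NonAscending)
    (e : E) (hb : G.lab (G.bar e) ≠ 1) (l : List E) :
    ∀ (v : V) (x : ℤ) (w : V) (y : ℤ), G.SP e v x l w y → y ≠ 1 →
      (G.setE e v x).NonAscending → (G.setE e w y).NonAscending := by
  induction l with
  | nil => rintro v x w y ⟨rfl, rfl⟩ _ h; exact h
  | cons g l ih =>
    rintro v x w y ⟨h1, h2, h3, j, rfl, h⟩ hy hn
    refine ih _ _ _ _ h hy ?_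
    rw [← setE_slide G e g v j h1 h2 (hpos g).ne']
    refine nonAsc_slide _ hn _ _ ?_ ?_
    · refine ⟨h1, h2, ?_, ?_⟩
      · simp [setE, h1, h3]
      · simp [setE, h1]
    · rw [setE_slide G e g v j h1 h2 (hpos g).ne']
      refine setE_reduced G hred e _ _ ?_ hb
      intro hc
      rw [hc] at h
      exact hy (SP_one G hpos hred hna e l _ _ _ h)

lemma core (G : LGraph V E) (hpos : G.Positive) (hred : G.Reduced) (hna : G.NonAscending)
    (e : E) (l : List E) (n : ℤ) (hn : n ≠ 1)
    (h : G.SP e (G.o e) (G.lab e) l (G.t e) (n * G.lab (G.bar e))) : False := by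
  have hy : n * G.lab (G.bar e) ≠ 1 := by
    intro hc
    have hg : G.lab (G.bar e) = 1 :=
      Int.eq_one_of_dvd_one (hpos _).le ⟨n, by rw [mul_comm]; exact hc.symm⟩
    rw [hg] at hc; omega
  have hb : G.lab (G.bar e) ≠ 1 := by
    intro hb
    have h1 : G.lab e = 1 := by
      by_contra hc
      refine no_loop G hred hna (G.bar e) (G.lab e) hc (hred _ hb) ?_
      rw [G.bar_bar, hb, one_mul]
    rw [h1] at h
    exact hy (SP_one G hpos hred hna e l _ _ _ h)
  have h1 := SP_nonAsc G hpos hred hna e hb l _ _ _ _ h hy (by rw [setE_self]; exact hna)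
  have h2 := setE_reduced G hred e (G.t e) _ hy hb
  have hbe := G.bar_ne e
  refine no_loop _ h2 h1 (G.bar e) n hn ?_ ?_
  · simp [setE, t, hbe, G.bar_bar]
  · simp [setE, hbe, G.bar_bar, mul_comm]

lemma SP_of_path (G : LGraph V E) (hpos : G.Positive) (e : E) (l : List E) :
    ∀ (v : V) (x : ℤ), G.IsEdgePath l → (∀ a ∈ l, a ≠ e ∧ a ≠ G.bar e) →
      (∀ a ∈ l.head?, G.o a = v) →
      (∀ i : Fin l.length, ∃ k : ℤ,
        (x : ℚ) * G.q (l.take i.1) = (k : ℚ) * (G.lab (l.get i) : ℚ)) →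
      ∃ y : ℤ, G.SP e v x l ((l.getLast?.map G.t).getD v) y ∧ (y : ℚ) = x * G.q l := by
  induction l with
  | nil =>
    intro v x _ _ _ _
    exact ⟨x, ⟨rfl, rfl⟩, by simp [q]⟩
  | cons g l ih =>
    intro v x hp ha ho hi
    obtain ⟨k, hk⟩ := hi ⟨0, by simp⟩
    have hg : (G.lab g : ℚ) ≠ 0 := by exact_mod_cast (hpos g).ne'
    simp [q] at hk
    have hk' : x = k * G.lab g := by exact_mod_cast hk
    have hq : ∀ l' : List E, (x : ℚ) * G.q (g :: l') = ((k * G.lab (G.bar g) : ℤ) : ℚ) * G.q l' := by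
      intro l'
      simp only [q, List.map_cons, List.prod_cons, qe]
      rw [hk]; push_cast; field_simp
    obtain ⟨y, hy, hyq⟩ := ih (G.t g) (k * G.lab (G.bar g)) (List.IsChain.tail hp)
      (fun a h => ha a (List.mem_cons_of_mem _ h))
      (by
        intro a h
        cases l with
        | nil => simp at h
        | cons b l =>
          simp at h; subst h
          exact (List.isChain_cons_cons.1 hp).1.symm)
      (by
        intro i
        obtain ⟨m, hm⟩ := hi ⟨i.1 + 1, by simp⟩
        refine ⟨m, ?_⟩
        rw [List.take_succ_cons, hq] at hm
        simpa using hm)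
    refine ⟨y, ⟨(ha g (by simp)).1, (ha g (by simp)).2, ho g (by simp), k, hk', ?_⟩, ?_⟩
    · convert hy using 1
      cases l with
      | nil => simp
      | cons b l =>
        rw [List.getLast?_cons_cons, List.getLast?_eq_some_getLast (l := b :: l) (by simp)]; simp
    · rw [hq, hyq]

lemma no_monotone (G : LGraph V E) (hpos : G.Positive) (hred : G.Reduced) (hna : G.NonAscending)
    (e : E) (l : List E) (h : G.IsStrictMonotoneCycle l e) : False := by
  obtain ⟨⟨⟨h1, h2, h3, h4⟩, h5, n, h6⟩, h7⟩ := h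
  obtain ⟨y, hy, hyq⟩ := SP_of_path G hpos (G.bar e) l _ _ h1 h2 h3 h4
  have he : (G.lab e : ℚ) ≠ 0 := by exact_mod_cast (hpos e).ne'
  have hbe : (G.lab (G.bar e) : ℚ) ≠ 0 := by exact_mod_cast (hpos (G.bar e)).ne'
  have hqn : G.q (l ++ [e]) = G.q l * ((G.lab (G.bar e) : ℚ) / G.lab e) := by
    simp [q, qe]
  have hyn : y = n * G.lab (G.bar (G.bar e)) := by
    rw [G.bar_bar]
    have : (y : ℚ) = n * G.lab e := by
      rw [hyq, ← h6, hqn]; field_simp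
    exact_mod_cast this
  refine core G hpos hred hna (G.bar e) l n ?_ ?_
  · rintro rfl; exact h7 (by rw [h6]; simp)
  · rw [← hyn]
    convert hy using 1
    rw [t, G.bar_bar, ← h5]
    rcases List.eq_nil_or_concat l with rfl | ⟨l', b, rfl⟩
    · simp [t]
    · simp

lemma no_integer (G : LGraph V E) (hpos : G.Positive) (hred : G.Reduced) (hna : G.NonAscending)
    (e f : E) (hf : f ≠ e) (hf' : f ≠ G.bar e) (ho : G.o f = G.o e) (ht : G.t f = G.t e)
    (hl : G.lab f = G.lab e) (hlb : G.lab (G.bar f) = G.lab (G.bar e))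
    (l : List E) (h : G.IsStrictIntegerCycle e l) : False := by
  obtain ⟨⟨h1, h2, h3, h4⟩, hne, h5, ⟨n, h6⟩, h7⟩ := h
  obtain ⟨y, hy, hyq⟩ := SP_of_path G hpos e l _ _ h1 h2 h3 h4
  have hyn : y = n * G.lab f := by
    rw [hl]
    have : (y : ℚ) = n * G.lab e := by rw [hyq, ← h6, mul_comm]
    exact_mod_cast this
  have hend : (l.getLast?.map G.t).getD (G.o e) = G.o e := by
    have hh : G.o (l.headD e) = G.o e := by
      cases l with
      | nil => rfl
      | cons b l => exact h3 b (by simp)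
    rw [← hh, ← h5]
    rcases List.eq_nil_or_concat l with rfl | ⟨l', b, rfl⟩
    · exact absurd rfl hne
    · simp
  rw [hend, hyn] at hy
  have := SP_append G e f hf hf' l _ _ _ _ hy ho
  rw [ht, hlb] at this
  refine core G hpos hred hna e _ n ?_ this
  rintro rfl; exact h7 (by rw [h6]; simp)

end LGraph

/-- (Lemma 4.3(h)) In a reduced non-ascending positively-labeled graph,
for mobile edges `e, f` with `f ∉ {e, ē}`, the slide of `e` over `f` (to a reduced graph)
followed by a slide of `f̄` over `ē` is impossible. -/
theorem stmt10 {V E : Type} [Finite V] [Finite E] (G : LGraph V E)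
    (hpos : G.Positive) (hred : G.Reduced) (hna : G.NonAscending)
    (e f : E) (hme : G.Mobile e) (hmf : G.Mobile f)
    (hfe : f ≠ e) (hfebar : f ≠ G.bar e) :
    ¬ (G.CanSlide e f ∧ (G.slide e f).Reduced ∧
        (G.slide e f).CanSlide (G.bar f) (G.bar e)) := by
  rintro ⟨hs, hr, hs2⟩
  have hna' := LGraph.nonAsc_slide G hna e f hs hr
  obtain ⟨-, -, ho, k, hk⟩ := hs
  obtain ⟨-, -, ho2, m, hm⟩ := hs2
  have h3 : G.bar f ≠ e := by rwa [Ne, LGraph.bar_eq_iff]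
  have hbe := G.bar_ne e
  simp only [LGraph.slide, hbe, h3, if_false] at ho2 hm
  have hf0 := hpos f
  have hb0 := hpos (G.bar e)
  have hk0 : 0 < k := by
    have := hpos e
    rw [hk] at this
    exact pos_of_mul_pos_right this hf0.le
  have hm0 : 0 < m := by
    have := hpos (G.bar f)
    rw [hm] at this
    exact pos_of_mul_pos_right this hb0.le
  by_cases hkm : k * m = 1
  · have hk1 : k = 1 := Int.eq_one_of_dvd_one hk0.le ⟨m, hkm.symm⟩
    have hm1 : m = 1 := by rw [hk1] at hkm; omega
    rw [hk1, mul_one] at hk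
    rw [hm1, mul_one] at hm
    rcases hme with ⟨l, h | h⟩ | ⟨l, h | h⟩
    · exact LGraph.no_monotone G hpos hred hna _ l h
    · exact LGraph.no_monotone G hpos hred hna _ l h
    · exact LGraph.no_integer G hpos hred hna e f hfe hfebar ho ho2.symm hk.symm hm l h
    · refine LGraph.no_integer G hpos hred hna (G.bar e) (G.bar f) ?_ ?_ ho2.symm ?_ hm ?_ l h
      · rwa [Ne, LGraph.bar_inj]
      · rwa [G.bar_bar]
      · rw [LGraph.t, LGraph.t, G.bar_bar, G.bar_bar, ho]
      · rw [G.bar_bar, G.bar_bar, hk]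
  · refine LGraph.no_loop _ hr hna' (G.bar e) (k * m) hkm ?_ ?_
    · simp [LGraph.slide, LGraph.t, hbe, G.bar_bar, ho2]
    · simp only [LGraph.slide, hbe, G.bar_bar, if_true, if_false]
      rw [hk, hm, mul_assoc, Int.mul_ediv_cancel_left _ hf0.ne']
      ring
end
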